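/- If C is a permutation class containing only finitely many simple permutations, then the generating function of C is algebraic over ℚ[x]. -/

import Mathlib

/-- A permutation of length `n`. -/
abbrev Perm (n : ℕ) := Equiv.Perm (Fin n)

/-- `σ` is contained in `π`: there is a strictly increasing sequence of indices of `π`
on which `π` is order isomorphic to `σ`. -/
def Contains {m n : ℕ} (σ : Perm m) (π : Perm n) : Prop :=
  ∃ f : Fin m → Fin n, StrictMono f ∧ ∀ s t : Fin m, π (f s) < π (f t) ↔ σ s < σ t

/-- A permutation class: a downset in the containment order. -/
def IsPermClass (C : ∀ n, Set (Perm n)) : Prop :=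
  ∀ ⦃m n : ℕ⦄ (σ : Perm m) (π : Perm n), π ∈ C n → Contains σ π → σ ∈ C m

/-- A set of contiguous values. -/
def IsRange {n : ℕ} (I : Finset (Fin n)) : Prop :=
  ∀ ⦃i j l : Fin n⦄, i ∈ I → l ∈ I → i ≤ j → j ≤ l → j ∈ I

/-- An interval of `π`: a set of contiguous indices mapped to a set of contiguous values. -/
def IsPermInterval {n : ℕ} (π : Perm n) (I : Finset (Fin n)) : Prop :=
  IsRange I ∧ IsRange (I.image π)

/-- A permutation is simple if its only intervals have size `0`, `1`, or `n`. -/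
def IsSimple {n : ℕ} (π : Perm n) : Prop :=
  ∀ I : Finset (Fin n), IsPermInterval π I → I.card ≤ 1 ∨ I.card = n

/-- The set of simple permutations belonging to the class `C` is finite. -/
def FinitelyManySimples (C : ∀ n, Set (Perm n)) : Prop :=
  {p : Σ n : ℕ, Perm n | p.2 ∈ C p.1 ∧ IsSimple p.2}.Finite

/-- The generating function `∑_{n ≥ 1} |S_n| xⁿ` of a set of permutations. -/
noncomputable def genFun (S : ∀ n, Set (Perm n)) : PowerSeries ℚ :=
  PowerSeries.mk fun n => if n = 0 then 0 else (Nat.card (S n) : ℚ)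

/-- A power series `f` is algebraic over `ℚ[x]` if there is a nonzero polynomial
`P(x,y) ∈ ℚ[x][y]` with `P(x,f) = 0`. -/
def IsAlgebraicOverQx (f : PowerSeries ℚ) : Prop :=
  ∃ P : Polynomial (Polynomial ℚ), P ≠ 0 ∧
    Polynomial.eval₂ Polynomial.coeToPowerSeries.ringHom f P = 0

theorem isAlgebraic_of_kaehler_eq_zero {K L ι : Type*} [Field K] [Field L] [CharZero K]
    [Algebra K L] [Finite ι] (f : ι → L)
    (h : ∀ i, KaehlerDifferential.D K (IntermediateField.adjoin K (Set.range f))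
      ⟨f i, IntermediateField.subset_adjoin _ _ ⟨i, rfl⟩⟩ = 0) (i : ι) :
    IsAlgebraic K (f i) := by
  set F := IntermediateField.adjoin K (Set.range f) with hF
  have hD : ∀ (x : L) (hx : x ∈ F), KaehlerDifferential.D K F ⟨x, hx⟩ = 0 := by
    intro x hx
    induction hx using IntermediateField.adjoin_induction with
    | mem x hx => obtain ⟨i, rfl⟩ := hx; exact h i
    | algebraMap x => exact (KaehlerDifferential.D K F).map_algebraMap x
    | add x y hx hy h1 h2 =>
      have := (KaehlerDifferential.D K F).map_add ⟨x, hx⟩ ⟨y, hy⟩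
      rw [h1, h2, add_zero] at this
      exact this
    | inv x hx h1 =>
      have := (KaehlerDifferential.D K F).leibniz_inv ⟨x, hx⟩
      rw [h1, smul_zero] at this
      exact this
    | mul x y hx hy h1 h2 =>
      have := (KaehlerDifferential.D K F).leibniz ⟨x, hx⟩ ⟨y, hy⟩
      rw [h1, h2, smul_zero, smul_zero, add_zero] at this
      exact this
  have hsub : Subsingleton (Ω[F⁄K]) := by
    have h1 := KaehlerDifferential.span_range_derivation K F
    rw [Submodule.span_eq_bot.2] at h1
    · exact subsingleton_of_bot_eq_top h1 |> (Submodule.subsingleton_iff F).1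
    · rintro _ ⟨⟨x, hx⟩, rfl⟩
      exact hD x hx
  have hE : Algebra.EssFiniteType K F :=
    IntermediateField.essFiniteType_iff.2 (IntermediateField.fg_adjoin_of_finite (Set.finite_range f))
  have hU : Algebra.FormallyUnramified K F := (Algebra.formallyUnramified_iff K F).2 hsub
  have hS := (Algebra.FormallyUnramified.iff_isSeparable K F).1 hU
  have hi : f i ∈ F := IntermediateField.subset_adjoin _ _ ⟨i, rfl⟩
  exact IntermediateField.isAlgebraic_iff.1
    ((hS.isSeparable K (⟨f i, hi⟩ : F)).isIntegral.isAlgebraic)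

/-- A finite family of elements that is determined, up to scalars and products of two
non-units, by itself, is algebraic. -/
theorem isAlgebraic_of_mem_closure_mul {R B k ι : Type*} [CommRing R] [IsDomain R] [CharZero R]
    [CommRing B] [IsDomain B] [Algebra R B] [FaithfulSMul R B] [CommRing k] [Nontrivial k]
    (ε : B →+* k) [Finite ι] (f : ι → B)
    (hf : ∀ i, f i ∈ AddSubgroup.closure (Set.range (algebraMap R B) ∪
      {z | ∃ a ∈ Algebra.adjoin R (Set.range f), ∃ b ∈ Algebra.adjoin R (Set.range f),
        ε a = 0 ∧ ε b = 0 ∧ z = a * b})) (i : ι) : IsAlgebraic R (f i) := by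
  let K := FractionRing R
  let L := FractionRing B
  have hinj : Function.Injective (algebraMap B L) := IsFractionRing.injective B L
  have hinjR : Function.Injective (algebraMap R L) := by
    rw [IsScalarTower.algebraMap_eq R B L]
    exact hinj.comp (FaithfulSMul.algebraMap_injective R B)
  have : FaithfulSMul R L := (faithfulSMul_iff_algebraMap_injective R L).2 hinjR
  let : Algebra K L := FractionRing.liftAlgebra R L
  have : IsScalarTower R K L := FractionRing.isScalarTower_liftAlgebra R L
  have : CharZero K := charZero_of_injective_algebraMap (IsFractionRing.injective R K)
  suffices hK : IsAlgebraic K (algebraMap B L (f i)) by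
    rw [← IsFractionRing.isAlgebraic_iff R K L] at hK
    exact (isAlgebraic_algebraMap_iff hinj).1 hK
  refine isAlgebraic_of_kaehler_eq_zero (fun i => algebraMap B L (f i)) ?_ i
  set F := IntermediateField.adjoin K (Set.range fun i => algebraMap B L (f i)) with hF
  set A := Algebra.adjoin R (Set.range f) with hA
  have hfA : ∀ i, f i ∈ A := fun i => Algebra.subset_adjoin ⟨i, rfl⟩
  have hAF : ∀ a ∈ A, algebraMap B L a ∈ F := by
    intro a ha
    induction ha using Algebra.adjoin_induction with
    | mem x hx =>
      obtain ⟨i, rfl⟩ := hx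
      exact IntermediateField.subset_adjoin _ _ ⟨i, rfl⟩
    | algebraMap r =>
      rw [← IsScalarTower.algebraMap_apply R B L, IsScalarTower.algebraMap_apply R K L]
      exact F.algebraMap_mem _
    | add x y _ _ hx hy => rw [map_add]; exact F.add_mem hx hy
    | mul x y _ _ hx hy => rw [map_mul]; exact F.mul_mem hx hy
  let φ : A →+* F := ((algebraMap B L).comp A.val.toRingHom).codRestrict F.toSubfield
    (fun a => hAF a.1 a.2)
  let : Module A (Ω[F⁄K]) := Module.compHom _ φ
  have hsm : ∀ (a : A) (w : Ω[F⁄K]), a • w = φ a • w := fun _ _ => rfl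
  let D := KaehlerDifferential.D K F
  have hφR : ∀ r, D (φ (algebraMap R A r)) = 0 := by
    intro r
    have : φ (algebraMap R A r) = algebraMap K F (algebraMap R K r) := by
      apply Subtype.ext
      change algebraMap B L (algebraMap R B r) = algebraMap K L (algebraMap R K r)
      rw [← IsScalarTower.algebraMap_apply R B L, ← IsScalarTower.algebraMap_apply R K L]
    rw [this]
    exact D.map_algebraMap _
  let N : Submodule A (Ω[F⁄K]) := Submodule.span A (Set.range fun i => D (φ ⟨f i, hfA i⟩))
  let m : Ideal A := RingHom.ker (ε.comp A.val.toRingHom)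
  have hDN : ∀ a (ha : a ∈ A), D (φ ⟨a, ha⟩) ∈ N := by
    intro a ha
    induction ha using Algebra.adjoin_induction with
    | mem x hx =>
      obtain ⟨i, rfl⟩ := hx
      exact Submodule.subset_span ⟨i, rfl⟩
    | algebraMap r =>
      have := hφR r
      exact (this ▸ N.zero_mem : D (φ (algebraMap R A r)) ∈ N)
    | add x y h1 h2 hx hy =>
      have : D (φ (⟨x, h1⟩ + ⟨y, h2⟩)) ∈ N := by
        rw [map_add, map_add]; exact N.add_mem hx hy
      exact this
    | mul x y h1 h2 hx hy =>
      have : D (φ (⟨x, h1⟩ * ⟨y, h2⟩)) ∈ N := by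
        rw [map_mul, D.leibniz, ← hsm, ← hsm]
        exact N.add_mem (N.smul_mem _ hy) (N.smul_mem _ hx)
      exact this
  have hDm : ∀ z, z ∈ AddSubgroup.closure (Set.range (algebraMap R B) ∪
      {z | ∃ a ∈ A, ∃ b ∈ A, ε a = 0 ∧ ε b = 0 ∧ z = a * b}) →
      ∃ hz : z ∈ A, D (φ ⟨z, hz⟩) ∈ m • N := by
    intro z hz
    induction hz using AddSubgroup.closure_induction with
    | mem z hz =>
      rcases hz with ⟨r, rfl⟩ | ⟨a, ha, b, hb, h1, h2, rfl⟩
      · refine ⟨A.algebraMap_mem r, ?_⟩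
        exact ((hφR r).symm ▸ (m • N).zero_mem : D (φ (algebraMap R A r)) ∈ m • N)
      · refine ⟨A.mul_mem ha hb, ?_⟩
        have : D (φ (⟨a, ha⟩ * ⟨b, hb⟩)) ∈ m • N := by
          rw [map_mul, D.leibniz, ← hsm, ← hsm]
          exact add_mem (Submodule.smul_mem_smul h1 (hDN b hb))
            (Submodule.smul_mem_smul h2 (hDN a ha))
        exact this
    | zero =>
      refine ⟨A.zero_mem, ?_⟩
      have : D (φ 0) ∈ m • N := by rw [map_zero, map_zero]; exact zero_mem _
      exact this
    | add x y _ _ hx hy =>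
      obtain ⟨h1, h1'⟩ := hx
      obtain ⟨h2, h2'⟩ := hy
      refine ⟨A.add_mem h1 h2, ?_⟩
      have : D (φ (⟨x, h1⟩ + ⟨y, h2⟩)) ∈ m • N := by
        rw [map_add, map_add]; exact add_mem h1' h2'
      exact this
    | neg x _ hx =>
      obtain ⟨h1, h1'⟩ := hx
      refine ⟨A.neg_mem h1, ?_⟩
      have : D (φ (-⟨x, h1⟩)) ∈ m • N := by
        rw [map_neg, map_neg]; exact neg_mem h1'
      exact this
  obtain ⟨r, hr, hrN⟩ := Submodule.exists_sub_one_mem_and_smul_eq_zero_of_fg_of_le_smul m N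
    (Submodule.fg_span (Set.finite_range _)) (by
      rw [Submodule.span_le]
      rintro _ ⟨i, rfl⟩
      exact (hDm (f i) (hf i)).2)
  have hr0 : φ r ≠ 0 := by
    intro h0
    have h1 : algebraMap B L r.1 = 0 := congrArg Subtype.val h0
    have h2 : r.1 = 0 := hinj (h1.trans (map_zero _).symm)
    have h3 : ε (r.1 - 1) = 0 := hr
    rw [h2] at h3
    simp at h3
  intro i
  have := hrN _ (hDN (f i) (hfA i))
  rw [hsm] at this
  exact (smul_eq_zero.1 this).resolve_left hr0

theorem algebraMap_polynomial_powerSeries :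
    algebraMap (Polynomial ℚ) (PowerSeries ℚ) = Polynomial.coeToPowerSeries.ringHom := by
  refine RingHom.ext fun p => ?_
  simp [PowerSeries.algebraMap_apply']

theorem faithfulSMul_polynomial_powerSeries :
    FaithfulSMul (Polynomial ℚ) (PowerSeries ℚ) := by
  rw [faithfulSMul_iff_algebraMap_injective, algebraMap_polynomial_powerSeries]
  exact Polynomial.coe_injective ℚ

/-- The generating function of a type whose elements carry a size. -/
noncomputable def sizeGF {Y : Type*} (sz : Y → ℕ) : PowerSeries ℚ :=
  PowerSeries.mk fun n => (Nat.card {y // sz y = n} : ℚ)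

theorem sizeGF_congr {Y Z : Type*} {sY : Y → ℕ} {sZ : Z → ℕ} (e : Y ≃ Z)
    (h : ∀ y, sZ (e y) = sY y) : sizeGF sY = sizeGF sZ := by
  ext n
  simp only [sizeGF, PowerSeries.coeff_mk]
  exact congrArg _ (Nat.card_congr (e.subtypeEquiv fun y => by rw [h]))

theorem sizeGF_sum {Y Z : Type*} {sY : Y → ℕ} {sZ : Z → ℕ}
    (hY : ∀ n, Finite {y // sY y = n}) (hZ : ∀ n, Finite {z // sZ z = n}) :
    sizeGF (Sum.elim sY sZ) = sizeGF sY + sizeGF sZ := by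
  ext n
  simp only [sizeGF, PowerSeries.coeff_mk, map_add]
  have h1 : Finite {y // Sum.elim sY sZ (Sum.inl y) = n} := hY n
  have h2 : Finite {z // Sum.elim sY sZ (Sum.inr z) = n} := hZ n
  rw [Nat.card_congr (Equiv.subtypeSum (p := fun x => Sum.elim sY sZ x = n)), Nat.card_sum]
  simp

/-- Objects of size `n` in a disjoint union. -/
def sigmaSizeEquiv {ι : Type*} {Y : ι → Type*} (s : ∀ i, Y i → ℕ) (n : ℕ) :
    {p : Σ i, Y i // s p.1 p.2 = n} ≃ Σ i, {y // s i y = n} where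
  toFun p := ⟨p.1.1, p.1.2, p.2⟩
  invFun p := ⟨⟨p.1, p.2.1⟩, p.2.2⟩
  left_inv _ := rfl
  right_inv _ := rfl

theorem finite_sigma_size {ι : Type*} [Finite ι] {Y : ι → Type*} {s : ∀ i, Y i → ℕ}
    (hY : ∀ i n, Finite {y // s i y = n}) (n : ℕ) :
    Finite {p : Σ i, Y i // s p.1 p.2 = n} :=
  have := fun i => hY i n
  Finite.of_equiv _ (sigmaSizeEquiv s n).symm

theorem sizeGF_sigma {ι : Type*} [Fintype ι] {Y : ι → Type*} {s : ∀ i, Y i → ℕ}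
    (hY : ∀ i n, Finite {y // s i y = n}) :
    sizeGF (fun p : Σ i, Y i => s p.1 p.2) = ∑ i, sizeGF (s i) := by
  ext n
  have := fun i => hY i n
  simp only [sizeGF, PowerSeries.coeff_mk, map_sum]
  rw [← Nat.cast_sum, ← Nat.card_sigma]
  exact congrArg _ (Nat.card_congr (sigmaSizeEquiv s n))

open Classical in
/-- Objects of size `n` in a product. -/
noncomputable def piSizeEquiv {ι : Type*} [Fintype ι] {Y : ι → Type*} (s : ∀ i, Y i → ℕ) (n : ℕ) :
    {p : ∀ i, Y i // ∑ i, s i (p i) = n} ≃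
      Σ l : (Finset.univ : Finset ι).finsuppAntidiag n, ∀ i, {y // s i y = l.1 i} where
  toFun p := ⟨⟨Finsupp.equivFunOnFinite.symm fun i => s i (p.1 i), by
    simp [Finset.mem_finsuppAntidiag, p.2]⟩, fun i => ⟨p.1 i, rfl⟩⟩
  invFun q := ⟨fun i => (q.2 i).1, (Finset.sum_congr rfl fun i _ => (q.2 i).2).trans
    (Finset.mem_finsuppAntidiag.1 q.1.2).1⟩
  left_inv _ := rfl
  right_inv := by
    rintro ⟨⟨l, hl⟩, q⟩
    have hq : ∀ i, s i (q i).1 = l i := fun i => (q i).2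
    refine Sigma.ext (Subtype.ext (Finsupp.ext hq)) ?_
    refine Function.hfunext rfl fun i j hij => ?_
    cases hij
    refine (Subtype.heq_iff_coe_eq fun y => ?_).2 rfl
    rw [← hq i]
    rfl

theorem finite_pi_size {ι : Type*} [Fintype ι] {Y : ι → Type*} {s : ∀ i, Y i → ℕ}
    (hY : ∀ i n, Finite {y // s i y = n}) (n : ℕ) :
    Finite {p : ∀ i, Y i // ∑ i, s i (p i) = n} :=
  Finite.of_equiv _ (piSizeEquiv s n).symm

theorem sizeGF_pi {ι : Type*} [Fintype ι] {Y : ι → Type*} {s : ∀ i, Y i → ℕ}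
    (hY : ∀ i n, Finite {y // s i y = n}) :
    sizeGF (fun p : ∀ i, Y i => ∑ i, s i (p i)) = ∏ i, sizeGF (s i) := by
  classical
  ext n
  simp only [sizeGF, PowerSeries.coeff_mk, PowerSeries.coeff_prod]
  rw [Nat.card_congr (piSizeEquiv s n), Nat.card_sigma]
  push_cast
  convert! Finset.sum_coe_sort (Finset.univ.finsuppAntidiag n)
    (fun l : ι →₀ ℕ => (Nat.card (∀ i, {y // s i y = l i}) : ℚ)) using 1
  refine Finset.sum_congr rfl fun l _ => ?_
  rw [Nat.card_pi]
  push_cast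
  rfl

set_option maxHeartbeats 1000000 in
/-- The family of objects of type `t` decomposes as the objects of size one and the products of
the families of objects of admissible types. -/
theorem sizeGF_fiber_eq {X T S : Type} [Fintype T] [Fintype S] (size : X → ℕ)
    (hfin : ∀ n, Finite {x // size x = n}) (hpos : ∀ x, 0 < size x) (ty : X → T)
    (ar : S → ℕ) (har : ∀ s, 2 ≤ ar s) (op : ∀ s, (Fin (ar s) → X) → X → Prop)
    (op_size : ∀ s x y, op s x y → size y = ∑ i, size (x i))
    (op_exists : ∀ y, size y ≠ 1 → ∃ s x, op s x y)
    (op_func : ∀ s x y y', op s x y → op s x y' → y = y')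
    (op_inj : ∀ s x s' x' y, op s x y → op s' x' y →
      (⟨s, x⟩ : Σ s, Fin (ar s) → X) = ⟨s', x'⟩) (t : T) (good : ∀ s, (Fin (ar s) → T) → Prop)
    [∀ s, Fintype {u // good s u}]
    (hgood : ∀ s x, good s (fun i => ty (x i)) ↔ ∃ y, op s x y ∧ ty y = t) :
    sizeGF (fun y : {y // ty y = t} => size y.1) =
      sizeGF (fun y : {y // ty y = t ∧ size y = 1} => size y.1) +
      ∑ s, ∑ u : {u // good s u}, ∏ i, sizeGF (fun y : {y // ty y = u.1 i} => size y.1) := by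
  have hfinP : ∀ (p : X → Prop) n, Finite {y : {y // p y} // size y.1 = n} := fun t n => by
    have := hfin n
    exact Finite.of_injective (fun y => (⟨y.1.1, y.2⟩ : {x // size x = n})) fun a b h => by
      have := congrArg Subtype.val h
      exact Subtype.ext (Subtype.ext this)
  have hex : ∀ s (u : {u // good s u}) (x : ∀ i, {x // ty x = u.1 i}),
      ∃ y, op s (fun i => (x i).1) y ∧ ty y = t := by
    rintro s ⟨u, hu⟩ x
    rw [← hgood]
    rwa [show (fun i => ty (x i).1) = u from funext fun i => (x i).2]
  choose g hg hgt using hex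
  let G : {y // ty y = t ∧ size y = 1} ⊕
      (Σ s, Σ u : {u // good s u}, ∀ i, {x // ty x = u.1 i}) → {y // ty y = t} :=
    Sum.elim (fun y => ⟨y.1, y.2.1⟩) (fun p => ⟨g p.1 p.2.1 p.2.2, hgt _ _ _⟩)
  have hsz2 : ∀ s x y, op s x y → size y ≠ 1 := by
    intro s x y h
    rw [op_size s x y h]
    have : ∑ i : Fin (ar s), 1 ≤ ∑ i, size (x i) := Finset.sum_le_sum fun i _ => hpos _
    simp only [Finset.sum_const, Finset.card_univ, Fintype.card_fin, smul_eq_mul] at this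
    have := har s
    omega
  have hG : Function.Bijective G := by
    constructor
    · rintro (⟨a, ha⟩ | ⟨s, ⟨u, hu⟩, x⟩) (⟨b, hb⟩ | ⟨s', ⟨u', hu'⟩, x'⟩) h
      · have := congrArg Subtype.val h
        exact congrArg _ (Subtype.ext this)
      · have h1 : a = g s' ⟨u', hu'⟩ x' := congrArg Subtype.val h
        exact absurd ha.2 (h1 ▸ hsz2 _ _ _ (hg _ _ _))
      · have h1 : g s ⟨u, hu⟩ x = b := congrArg Subtype.val h
        exact absurd hb.2 (h1 ▸ hsz2 _ _ _ (hg _ _ _))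
      · have h1 : g s ⟨u, hu⟩ x = g s' ⟨u', hu'⟩ x' := congrArg Subtype.val h
        have h2 := hg s ⟨u, hu⟩ x
        have h3 := hg s' ⟨u', hu'⟩ x'
        rw [← h1] at h3
        have h4 := op_inj _ _ _ _ _ h2 h3
        obtain rfl : s = s' := congrArg Sigma.fst h4
        have h5 := eq_of_heq (Sigma.mk.inj h4).2
        obtain rfl : u = u' := by
          funext i
          exact ((x i).2.symm.trans (congrArg ty (congrFun h5 i))).trans (x' i).2
        obtain rfl : x = x' := by
          funext i
          exact Subtype.ext (congrFun h5 i)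
        rfl
    · rintro ⟨y, rfl⟩
      by_cases h1 : size y = 1
      · exact ⟨Sum.inl ⟨y, rfl, h1⟩, rfl⟩
      · obtain ⟨s, x, hx⟩ := op_exists y h1
        let u : {u // good s u} := ⟨fun i => ty (x i), (hgood s x).2 ⟨y, hx, rfl⟩⟩
        let x' : ∀ i, {x // ty x = u.1 i} := fun i => ⟨x i, rfl⟩
        exact ⟨Sum.inr ⟨s, u, x'⟩, Subtype.ext (op_func s x _ _ (hg s u x') hx)⟩
  have hpi : ∀ s (u : {u // good s u}) n,
      Finite {p : ∀ i, {x // ty x = u.1 i} // ∑ i, size (p i).1 = n} :=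
    fun s u => finite_pi_size fun i => hfinP fun x => ty x = u.1 i
  have hsig : ∀ s n, Finite {p : Σ u : {u // good s u}, ∀ i, {x // ty x = u.1 i} //
      ∑ i, size (p.2 i).1 = n} :=
    fun s => finite_sigma_size (hpi s)
  have e1 := sizeGF_congr (Equiv.ofBijective G hG) (sZ := fun y => size y.1) (sY := Sum.elim
    (fun y => size y.1) (fun p => ∑ i, size (p.2.2 i).1)) (by
      rintro (y | ⟨s, u, x⟩)
      · rfl
      · exact op_size _ _ _ (hg s u x))
  rw [← e1, sizeGF_sum (hfinP _) (finite_sigma_size hsig)]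
  congr 1
  rw [sizeGF_sigma hsig]
  refine Finset.sum_congr rfl fun s _ => ?_
  rw [sizeGF_sigma (hpi s)]
  refine Finset.sum_congr rfl fun u _ => ?_
  exact sizeGF_pi fun i => hfinP fun x => ty x = u.1 i

/-- A combinatorial class in which every object of size other than one is built in exactly one
way by one of finitely many operations of arity at least two, where the possible constructions
and the types of their results depend only on finitely many types of the arguments, has an
algebraic generating function. -/
theorem isAlgebraic_sizeGF {X T S : Type} [Finite T] [Finite S] (size : X → ℕ)
    (hfin : ∀ n, Finite {x // size x = n}) (hpos : ∀ x, 0 < size x) (ty : X → T)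
    (ar : S → ℕ) (har : ∀ s, 2 ≤ ar s) (op : ∀ s, (Fin (ar s) → X) → X → Prop)
    (op_size : ∀ s x y, op s x y → size y = ∑ i, size (x i))
    (op_congr : ∀ s x x' y, (∀ i, ty (x i) = ty (x' i)) → op s x y →
      ∃ y', op s x' y' ∧ ty y' = ty y)
    (op_exists : ∀ y, size y ≠ 1 → ∃ s x, op s x y)
    (op_func : ∀ s x y y', op s x y → op s x y' → y = y')
    (op_inj : ∀ s x s' x' y, op s x y → op s' x' y →
      (⟨s, x⟩ : Σ s, Fin (ar s) → X) = ⟨s', x'⟩) :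
    IsAlgebraic (Polynomial ℚ) (sizeGF size) := by
  classical
  cases nonempty_fintype T
  cases nonempty_fintype S
  let f : T → PowerSeries ℚ := fun t => sizeGF fun y : {y // ty y = t} => size y.1
  have hfinT : ∀ t n, Finite {y : {y // ty y = t} // size y.1 = n} := fun t n => by
    have := hfin n
    exact Finite.of_injective (fun y => (⟨y.1.1, y.2⟩ : {x // size x = n})) fun a b h => by
      have := congrArg Subtype.val h
      exact Subtype.ext (Subtype.ext this)
  have htot : sizeGF size = ∑ t, f t := by
    rw [← sizeGF_sigma hfinT]
    exact sizeGF_congr (Equiv.sigmaFiberEquiv ty).symm fun y => rfl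
  have hε : ∀ t, PowerSeries.constantCoeff (f t) = 0 := by
    intro t
    have : IsEmpty {y : {y // ty y = t} // size y.1 = 0} := ⟨fun y => (hpos y.1.1).ne' y.2⟩
    rw [← PowerSeries.coeff_zero_eq_constantCoeff_apply]
    simp only [f, sizeGF, PowerSeries.coeff_mk]
    rw [Nat.card_of_isEmpty, Nat.cast_zero]
  rw [htot]
  have := faithfulSMul_polynomial_powerSeries
  refine (Subalgebra.algebraicClosure (Polynomial ℚ) (PowerSeries ℚ)).sum_mem fun t _ => ?_
  refine isAlgebraic_of_mem_closure_mul (R := Polynomial ℚ)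
    (PowerSeries.constantCoeff (R := ℚ)) f (fun t => ?_) t
  have hfA : ∀ t, f t ∈ Algebra.adjoin (Polynomial ℚ) (Set.range f) :=
    fun t => Algebra.subset_adjoin ⟨t, rfl⟩
  have key := sizeGF_fiber_eq size hfin hpos ty ar har op op_size op_exists op_func op_inj t
    (fun s u => ∃ x y, (∀ i, ty (x i) = u i) ∧ op s x y ∧ ty y = t) (by
      refine fun s x => ⟨?_, fun ⟨y, h1, h2⟩ => ⟨x, y, fun _ => rfl, h1, h2⟩⟩
      rintro ⟨x', y, h1, h2, rfl⟩
      exact op_congr s x' x y h1 h2)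
  rw [show f t = _ from key]
  refine add_mem (AddSubgroup.subset_closure (Or.inl ?_)) (sum_mem fun s _ => sum_mem fun u _ =>
    AddSubgroup.subset_closure (Or.inr ?_))
  · refine ⟨Polynomial.monomial 1 (Nat.card {y // ty y = t ∧ size y = 1} : ℚ), ?_⟩
    rw [PowerSeries.algebraMap_apply']
    ext n
    simp only [Algebra.algebraMap_self, PowerSeries.map_id, id_eq,
      Polynomial.coe_monomial, PowerSeries.coeff_monomial, sizeGF, PowerSeries.coeff_mk]
    split_ifs with hn
    · subst hn
      exact congrArg _ (Nat.card_congr (Equiv.subtypeUnivEquiv fun y => y.2.2).symm)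
    · have : IsEmpty {y : {y // ty y = t ∧ size y = 1} // size y.1 = n} :=
        ⟨fun y => hn (y.2.symm.trans y.1.2.2)⟩
      rw [Nat.card_of_isEmpty, Nat.cast_zero]
  · have hprod : ∀ k, 2 ≤ k → ∀ v : Fin k → T, ∃ a ∈ Algebra.adjoin (Polynomial ℚ) (Set.range f),
        ∃ b ∈ Algebra.adjoin (Polynomial ℚ) (Set.range f),
        PowerSeries.constantCoeff a = 0 ∧ PowerSeries.constantCoeff b = 0 ∧
        ∏ i, f (v i) = a * b := by
      intro k hk v
      obtain ⟨k, rfl⟩ := Nat.exists_eq_add_of_le' hk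
      refine ⟨_, hfA (v 0), ∏ i : Fin (k + 1), f (v i.succ), prod_mem fun i _ => hfA _, hε _, ?_,
        Fin.prod_univ_succ _⟩
      rw [map_prod]
      exact Finset.prod_eq_zero (Finset.mem_univ 0) (hε _)
    exact hprod _ (har s) u.1

/-- Two finite point sets with linear orders on both coordinates define a permutation. -/
theorem exists_standardization {X L L' : Type*} [Fintype X] [LinearOrder L] [LinearOrder L']
    (a : X → L) (b : X → L') (ha : Function.Injective a) (hb : Function.Injective b) {n : ℕ}
    (hn : Fintype.card X = n) :
    ∃ (π : Perm n) (e : Fin n ≃ X), StrictMono (fun i => a (e i)) ∧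
      ∀ i j, π i < π j ↔ b (e i) < b (e j) := by
  obtain ⟨e, he⟩ : ∃ e : Fin n ≃ X, StrictMono fun i => a (e i) := by
    let := LinearOrder.lift' a ha
    exact ⟨(Fintype.orderIsoFinOfCardEq X hn).toEquiv,
      fun i j h => (Fintype.orderIsoFinOfCardEq X hn).strictMono h⟩
  obtain ⟨e', he'⟩ : ∃ e : Fin n ≃ X, StrictMono fun i => b (e i) := by
    let := LinearOrder.lift' b hb
    exact ⟨(Fintype.orderIsoFinOfCardEq X hn).toEquiv,
      fun i j h => (Fintype.orderIsoFinOfCardEq X hn).strictMono h⟩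
  refine ⟨e.trans e'.symm, e, he, fun i j => ?_⟩
  rw [← he'.lt_iff_lt]
  simp

theorem perm_eq_of_lt_iff {n : ℕ} {π π' : Perm n} (h : ∀ i j, π i < π j ↔ π' i < π' j) :
    π = π' := by
  have h1 : StrictMono fun i => π' (π.symm i) := fun i j hij => by
    rw [← h]; simpa using hij
  have h2 : (fun i => π' (π.symm i)) = id := by
    refine (StrictMono.range_inj h1 strictMono_id).1 ?_
    rw [Set.range_id, Set.range_eq_univ]
    exact (π.symm.trans π').surjective
  ext i
  have := congrFun h2 (π i)
  simp only [Equiv.symm_apply_apply, id] at this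
  rw [this]

theorem sigma_perm_ext {p q : Σ n, Perm n} (g : Fin p.1 → Fin q.1) (hg : StrictMono g)
    (hs : Function.Surjective g) (h : ∀ i j, p.2 i < p.2 j ↔ q.2 (g i) < q.2 (g j)) : p = q := by
  obtain ⟨n, π⟩ := p
  obtain ⟨n', π'⟩ := q
  obtain rfl : n = n' := by
    simpa using Fintype.card_congr (Equiv.ofBijective g ⟨hg.injective, hs⟩)
  have : g = id :=
    (StrictMono.range_inj hg strictMono_id).1 (by rw [hs.range_eq, Set.range_id])
  subst this
  obtain rfl : π = π' := perm_eq_of_lt_iff h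
  rfl

theorem contains_refl {n : ℕ} (π : Perm n) : Contains π π :=
  ⟨id, strictMono_id, fun _ _ => Iff.rfl⟩

theorem Contains.trans {l m n : ℕ} {ρ : Perm l} {σ : Perm m} {π : Perm n} (h : Contains ρ σ)
    (h' : Contains σ π) : Contains ρ π := by
  obtain ⟨f, hf, hf'⟩ := h
  obtain ⟨g, hg, hg'⟩ := h'
  exact ⟨g ∘ f, hg.comp hf, fun s t => (hg' _ _).trans (hf' _ _)⟩

theorem Contains.le {m n : ℕ} {σ : Perm m} {π : Perm n} (h : Contains σ π) : m ≤ n := by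
  obtain ⟨f, hf, -⟩ := h
  simpa using Fintype.card_le_of_injective f hf.injective

theorem Contains.antisymm {p q : Σ n, Perm n} (h : Contains p.2 q.2) (h' : Contains q.2 p.2) :
    p = q := by
  have h1 : p.1 = q.1 := le_antisymm h.le h'.le
  obtain ⟨f, hf, hf'⟩ := h
  refine sigma_perm_ext f hf ?_ fun i j => (hf' i j).symm
  exact ((Fintype.bijective_iff_injective_and_card f).2 ⟨hf.injective, by simp [h1]⟩).2

/-- The points of `π` with indices in `F` form the pattern `p`. -/
def IsPat {n : ℕ} (π : Perm n) (F : Set (Fin n)) (p : Σ k, Perm k) : Prop :=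
  ∃ e : Fin p.1 → Fin n, StrictMono e ∧ (∀ i, i ∈ F ↔ ∃ x, e x = i) ∧
    ∀ x y, π (e x) < π (e y) ↔ p.2 x < p.2 y

theorem exists_isPat {n : ℕ} (π : Perm n) (F : Set (Fin n)) : ∃ p, IsPat π F p := by
  classical
  obtain ⟨ρ, e, he, h⟩ := exists_standardization (fun i : F => i.1) (fun i : F => π i.1)
    Subtype.val_injective (π.injective.comp Subtype.val_injective) rfl
  refine ⟨⟨_, ρ⟩, fun x => (e x).1, he, fun i => ⟨fun hi => ⟨e.symm ⟨i, hi⟩, by simp⟩, ?_⟩,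
    fun x y => (h x y).symm⟩
  rintro ⟨x, rfl⟩
  exact (e x).2

theorem contains_isPat_iff {k n : ℕ} {τ : Perm k} {F : Set (Fin k)} {π : Perm n}
    {G : Set (Fin n)} {p q : Σ k, Perm k} (hp : IsPat τ F p) (hq : IsPat π G q) :
    Contains p.2 q.2 ↔ ∃ g : F → Fin n, (∀ s, g s ∈ G) ∧
      ∀ s t : F, (s.1 < t.1 → g s < g t) ∧ (τ s < τ t ↔ π (g s) < π (g t)) := by
  obtain ⟨e, he, hF, hc⟩ := hp
  obtain ⟨e', he', hG, hc'⟩ := hq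
  constructor
  · rintro ⟨f, hf, hf'⟩
    choose d hd using fun s : F => (hF s).1 s.2
    refine ⟨fun s => e' (f (d s)), fun s => (hG _).2 ⟨_, rfl⟩, fun s t => ⟨fun h => ?_, ?_⟩⟩
    · apply he'
      apply hf
      rwa [← he.lt_iff_lt, hd, hd]
    · rw [hc', hf', ← hc, hd, hd]
  · rintro ⟨g, hg, h⟩
    choose d hd using fun x => (hG _).1 (hg ⟨e x, (hF _).2 ⟨x, rfl⟩⟩)
    refine ⟨d, fun x y hxy => ?_, fun x y => ?_⟩
    · rw [← he'.lt_iff_lt, hd, hd]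
      exact (h _ _).1 (he hxy)
    · rw [← hc', hd, hd, ← (h _ _).2, hc]

theorem IsPat.contains {n : ℕ} {π : Perm n} {F : Set (Fin n)} {p : Σ k, Perm k}
    (h : IsPat π F p) : Contains p.2 π := by
  obtain ⟨e, he, -, hc⟩ := h
  exact ⟨e, he, hc⟩

theorem IsPat.unique {n : ℕ} {π : Perm n} {F : Set (Fin n)} {p q : Σ k, Perm k}
    (hp : IsPat π F p) (hq : IsPat π F q) : p = q :=
  Contains.antisymm
    ((contains_isPat_iff hp hq).2 ⟨fun s => s.1, fun s => s.2, fun _ _ => ⟨id, Iff.rfl⟩⟩)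
    ((contains_isPat_iff hq hp).2 ⟨fun s => s.1, fun s => s.2, fun _ _ => ⟨id, Iff.rfl⟩⟩)

theorem IsPat.ncard {n : ℕ} {π : Perm n} {F : Set (Fin n)} {p : Σ k, Perm k}
    (h : IsPat π F p) : F.ncard = p.1 := by
  obtain ⟨e, he, hF, -⟩ := h
  have : F = Set.range e := Set.ext hF
  rw [this, ← Set.image_univ, Set.ncard_image_of_injective _ he.injective, Set.ncard_univ]
  simp

/-- The fibres of `b` are the blocks of a decomposition of `π` as an inflation of `σ`. -/
structure IsBlockMap {m n : ℕ} (σ : Perm m) (π : Perm n) (b : Fin n → Fin m) : Prop where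
  mono : Monotone b
  surj : Function.Surjective b
  lt_iff : ∀ i j, b i ≠ b j → (π i < π j ↔ σ (b i) < σ (b j))

/-- `π` is the inflation of `σ` by the nonempty permutations `α c`. -/
def IsInflation {m : ℕ} (σ : Perm m) (α : Fin m → Σ k, Perm k) (π : Σ n, Perm n) : Prop :=
  ∃ b, IsBlockMap σ π.2 b ∧ ∀ c, IsPat π.2 {i | b i = c} (α c)

theorem isBlockMap_id {n : ℕ} (π : Perm n) : IsBlockMap π π id :=
  ⟨monotone_id, Function.surjective_id, fun _ _ _ => Iff.rfl⟩

theorem IsBlockMap.comp {l m n : ℕ} {ρ : Perm l} {σ : Perm m} {π : Perm n} {b : Fin n → Fin m}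
    {q : Fin m → Fin l} (hq : IsBlockMap ρ σ q) (hb : IsBlockMap σ π b) :
    IsBlockMap ρ π (q ∘ b) :=
  ⟨hq.mono.comp hb.mono, hq.surj.comp hb.surj, fun i j h =>
    (hb.lt_iff i j fun h' => h (congrArg q h')).trans (hq.lt_iff _ _ h)⟩

theorem IsBlockMap.lt_of_lt {m n : ℕ} {σ : Perm m} {π : Perm n} {b : Fin n → Fin m}
    (hb : IsBlockMap σ π b) {i j : Fin n} (h : b i < b j) : i < j :=
  lt_of_not_ge fun h' => absurd (hb.mono h') (not_le.2 h)

theorem IsBlockMap.contains {m n : ℕ} {σ : Perm m} {π : Perm n} {b : Fin n → Fin m}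
    (hb : IsBlockMap σ π b) : Contains σ π := by
  choose e he using hb.surj
  refine ⟨e, fun c d h => hb.lt_of_lt (by rwa [he, he]), fun c d => ?_⟩
  rcases eq_or_ne c d with rfl | h
  · simp
  · rw [hb.lt_iff _ _ (by rwa [he, he]), he, he]

theorem IsBlockMap.exists_isInflation {m n : ℕ} {σ : Perm m} {π : Perm n} {b : Fin n → Fin m}
    (hb : IsBlockMap σ π b) :
    ∃ α : Fin m → Σ k, Perm k, (∀ c, 0 < (α c).1) ∧ (∀ c, IsPat π {i | b i = c} (α c)) := by
  choose α hα using fun c => exists_isPat π {i | b i = c}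
  refine ⟨α, fun c => ?_, hα⟩
  rw [← (hα c).ncard, Set.ncard_pos]
  exact hb.surj c

theorem exists_isInflation {m : ℕ} (σ : Perm m) (α : Fin m → Σ k, Perm k)
    (hα : ∀ c, 0 < (α c).1) : ∃ π, IsInflation σ α π := by
  obtain ⟨π, e, he, h⟩ := exists_standardization
    (fun x : Σ c, Fin (α c).1 => toLex (x.1, (x.2 : ℕ)))
    (fun x : Σ c, Fin (α c).1 => toLex (σ x.1, ((α x.1).2 x.2 : ℕ))) (by
      rintro ⟨c, x⟩ ⟨d, y⟩ h
      obtain ⟨h1, h⟩ := Prod.ext_iff.1 (toLex.injective h)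
      obtain rfl : c = d := h1
      obtain rfl : x = y := Fin.ext h
      rfl) (by
      rintro ⟨c, x⟩ ⟨d, y⟩ h
      obtain ⟨h1, h⟩ := Prod.ext_iff.1 (toLex.injective h)
      obtain rfl : c = d := σ.injective h1
      obtain rfl : x = y := (α c).2.injective (Fin.ext h)
      rfl) rfl
  have hlt : ∀ x y : Σ c, Fin (α c).1, e.symm x < e.symm y ↔
      x.1 < y.1 ∨ x.1 = y.1 ∧ (x.2 : ℕ) < y.2 := by
    intro x y
    obtain ⟨i, rfl⟩ := e.surjective x
    obtain ⟨j, rfl⟩ := e.surjective y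
    rw [e.symm_apply_apply, e.symm_apply_apply, ← he.lt_iff_lt, Prod.Lex.toLex_lt_toLex]
  have hlt' : ∀ x y : Σ c, Fin (α c).1, π (e.symm x) < π (e.symm y) ↔
      σ x.1 < σ y.1 ∨ σ x.1 = σ y.1 ∧ ((α x.1).2 x.2 : ℕ) < (α y.1).2 y.2 := by
    intro x y
    obtain ⟨i, rfl⟩ := e.surjective x
    obtain ⟨j, rfl⟩ := e.surjective y
    rw [e.symm_apply_apply, e.symm_apply_apply, h, Prod.Lex.toLex_lt_toLex]
  refine ⟨⟨_, π⟩, fun i => (e i).1, ⟨fun i j hij => ?_, fun c => ⟨e.symm ⟨c, ⟨0, hα c⟩⟩, by simp⟩,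
    fun i j hij => ?_⟩, fun c => ⟨fun x => e.symm ⟨c, x⟩, fun x y hxy => ?_, fun i => ?_,
    fun x y => ?_⟩⟩
  · have := he.monotone hij
    rw [Prod.Lex.toLex_le_toLex] at this
    rcases this with h | h
    · exact h.le
    · exact h.1.le
  · change π i < π j ↔ _
    rw [h, Prod.Lex.toLex_lt_toLex]
    have : σ (e i).1 ≠ σ (e j).1 := fun h => hij (σ.injective h)
    simp [this]
  · rw [hlt]; exact Or.inr ⟨rfl, hxy⟩
  · constructor
    · rintro rfl
      exact ⟨(e i).2, by simp⟩
    · rintro ⟨x, rfl⟩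
      simp
  · refine (hlt' _ _).trans ?_
    simp

theorem IsInflation.size_eq {m : ℕ} {σ : Perm m} {α : Fin m → Σ k, Perm k} {π : Σ n, Perm n}
    (h : IsInflation σ α π) : π.1 = ∑ c, (α c).1 := by
  classical
  obtain ⟨b, -, h⟩ := h
  have h1 := Finset.card_eq_sum_card_fiberwise (f := b) (s := Finset.univ) (t := Finset.univ)
    (by simp)
  rw [Finset.card_univ, Fintype.card_fin] at h1
  rw [h1]
  refine Finset.sum_congr rfl fun c _ => ?_
  rw [← (h c).ncard, ← Set.ncard_coe_finset]
  simp

theorem IsInflation.contains_of_contains {m : ℕ} {σ : Perm m} {α α' : Fin m → Σ k, Perm k}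
    {π π' : Σ n, Perm n} (h : IsInflation σ α π) (h' : IsInflation σ α' π') (N : ℕ)
    (hα : ∀ c (τ : Σ k, Perm k), τ.1 ≤ N → Contains τ.2 (α c).2 → Contains τ.2 (α' c).2)
    (τ : Σ k, Perm k) (hτ : τ.1 ≤ N) (hc : Contains τ.2 π.2) : Contains τ.2 π'.2 := by
  obtain ⟨b, hb, hp⟩ := h
  obtain ⟨b', hb', hp'⟩ := h'
  obtain ⟨f, hf, hf'⟩ := hc
  choose ρ hρ using fun c => exists_isPat τ.2 {s | b (f s) = c}
  have h1 : ∀ c, Contains (ρ c).2 (α' c).2 := fun c => by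
    refine hα c _ ((hρ c).contains.le.trans hτ) ((contains_isPat_iff (hρ c) (hp c)).2 ?_)
    exact ⟨fun s => f s, fun s => s.2, fun s t => ⟨fun h => hf h, (hf' _ _).symm⟩⟩
  choose g hg hg' using fun c => (contains_isPat_iff (hρ c) (hp' c)).1 (h1 c)
  have hgb : ∀ s, b' (g (b (f s)) ⟨s, rfl⟩) = b (f s) := fun s => hg _ ⟨s, rfl⟩
  have hgeq : ∀ c d s (h1 : b (f s) = c) (h2 : b (f s) = d), g c ⟨s, h1⟩ = g d ⟨s, h2⟩ := by
    intro c d s h1 h2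
    subst h1
    subst h2
    rfl
  refine ⟨fun s => g (b (f s)) ⟨s, rfl⟩, fun s t hst => ?_, fun s t => ?_⟩ <;> beta_reduce
  · rcases (hb.mono (hf hst).le).lt_or_eq with h | h
    · exact hb'.lt_of_lt (by rwa [hgb, hgb])
    · rw [hgeq _ (b (f t)) s rfl h]
      exact (hg' _ _ _).1 hst
  · rcases eq_or_ne (b (f s)) (b (f t)) with h | h
    · rw [hgeq _ (b (f t)) s rfl h]
      exact ((hg' _ _ _).2).symm
    · rw [hb'.lt_iff _ _ (by rwa [hgb, hgb]), hgb, hgb, ← hb.lt_iff _ _ h, hf']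

theorem IsInflation.mono {m : ℕ} {σ : Perm m} {α α' : Fin m → Σ k, Perm k}
    {π π' : Σ n, Perm n} (h : IsInflation σ α π) (h' : IsInflation σ α' π')
    (hα : ∀ c, Contains (α c).2 (α' c).2) : Contains π.2 π'.2 :=
  h.contains_of_contains h' π.1 (fun c _ _ hτ => hτ.trans (hα c)) π le_rfl (contains_refl _)

theorem IsInflation.unique {m : ℕ} {σ : Perm m} {α : Fin m → Σ k, Perm k}
    {π π' : Σ n, Perm n} (h : IsInflation σ α π) (h' : IsInflation σ α π') : π = π' :=
  Contains.antisymm (h.mono h' fun _ => contains_refl _) (h'.mono h fun _ => contains_refl _)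

theorem IsRange.lt_iff_lt {n : ℕ} {I : Finset (Fin n)} (hI : IsRange I) {x y z : Fin n}
    (hx : x ∈ I) (hy : y ∈ I) (hz : z ∉ I) : (x < z ↔ y < z) ∧ (z < x ↔ z < y) := by
  have h1 : ∀ x y, x ∈ I → y ∈ I → x < z → y < z := fun x y hx hy h =>
    lt_of_not_ge fun h' => hz (hI hx hy h.le h')
  have h2 : ∀ x y, x ∈ I → y ∈ I → z < x → z < y := fun x y hx hy h =>
    lt_of_not_ge fun h' => hz (hI hy hx h' h.le)
  exact ⟨⟨h1 _ _ hx hy, h1 _ _ hy hx⟩, ⟨h2 _ _ hx hy, h2 _ _ hy hx⟩⟩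

/-- Collapsing a nontrivial interval to a point. -/
theorem IsPermInterval.exists_isBlockMap {m : ℕ} {σ : Perm m} {I : Finset (Fin m)}
    (hI : IsPermInterval σ I) (h1 : 1 < I.card) (h2 : I.card ≠ m) :
    ∃ m', 2 ≤ m' ∧ m' < m ∧ ∃ (σ' : Perm m') (q : Fin m → Fin m'), IsBlockMap σ' σ q := by
  classical
  obtain ⟨i0, hi0, i1, hi1, h01⟩ := Finset.one_lt_card.1 h1
  obtain ⟨j0, hj0⟩ : ∃ j, j ∉ I := by
    by_contra! h
    exact h2 (by rw [Finset.eq_univ_iff_forall.2 h, Finset.card_univ, Fintype.card_fin])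
  obtain ⟨σ', e, he, h⟩ := exists_standardization (fun i : {i // i ∉ I ∨ i = i0} => i.1)
    (fun i => σ i.1) Subtype.val_injective (σ.injective.comp Subtype.val_injective) rfl
  have hσ : ∀ {i j}, i ∈ I → j ∉ I → (σ i < σ j ↔ σ i0 < σ j) ∧ (σ j < σ i ↔ σ j < σ i0) :=
    fun hi hj => hI.2.lt_iff_lt (Finset.mem_image_of_mem _ hi) (Finset.mem_image_of_mem _ hi0)
      (by simpa using hj)
  let κ : Fin m → {i // i ∉ I ∨ i = i0} := fun i =>
    if h : i ∈ I then ⟨i0, Or.inr rfl⟩ else ⟨i, Or.inl h⟩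
  have hκ : ∀ i, i ∈ I → (κ i).1 = i0 := fun i hi => by simp [κ, hi]
  have hκ' : ∀ i, i ∉ I → (κ i).1 = i := fun i hi => by simp [κ, hi]
  refine ⟨_, ?_, ?_, σ', fun i => e.symm (κ i), fun i j hij => ?_, fun x => ⟨(e x).1, ?_⟩,
    fun i j hij => ?_⟩
  · exact Fintype.one_lt_card_iff.2 ⟨⟨i0, Or.inr rfl⟩, ⟨j0, Or.inl hj0⟩, fun h =>
      hj0 (by rw [← Subtype.mk.inj h]; exact hi0)⟩
  · conv_rhs => rw [← Fintype.card_fin m]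
    exact Fintype.card_subtype_lt (x := i1) (by simp [hi1, Ne.symm h01])
  · rw [← he.le_iff_le]
    simp only [Equiv.apply_symm_apply]
    by_cases hi : i ∈ I <;> by_cases hj : j ∈ I
    · rw [hκ i hi, hκ j hj]
    · rw [hκ i hi, hκ' j hj, ← not_lt, ← (hI.1.lt_iff_lt hi hi0 hj).2, not_lt]
      exact hij
    · rw [hκ' i hi, hκ j hj, ← not_lt, ← (hI.1.lt_iff_lt hj hi0 hi).1, not_lt]
      exact hij
    · rwa [hκ' i hi, hκ' j hj]
  · rw [Equiv.symm_apply_eq]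
    ext1
    rcases (e x).2 with h | h
    · exact hκ' _ h
    · rw [hκ _ (by rw [h]; exact hi0), h]
  · rw [h]
    simp only [Equiv.apply_symm_apply]
    by_cases hi : i ∈ I <;> by_cases hj : j ∈ I
    · exact absurd (congrArg e.symm (Subtype.ext ((hκ i hi).trans (hκ j hj).symm))) hij
    · rw [hκ i hi, hκ' j hj, (hσ hi hj).1]
    · rw [hκ' i hi, hκ j hj, (hσ hj hi).2]
    · rw [hκ' i hi, hκ' j hj]

theorem exists_isSimple_isBlockMap {n : ℕ} (π : Perm n) (hn : 2 ≤ n) :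
    ∃ m, 2 ≤ m ∧ ∃ (σ : Perm m) (b : Fin n → Fin m), IsSimple σ ∧ IsBlockMap σ π b := by
  induction n using Nat.strong_induction_on with
  | _ n ih =>
    by_cases h : IsSimple π
    · exact ⟨n, hn, π, id, h, isBlockMap_id π⟩
    · simp only [IsSimple, not_forall, not_or, not_le] at h
      obtain ⟨I, hI, h1, h2⟩ := h
      obtain ⟨m', hm', hlt, σ', q, hq⟩ := hI.exists_isBlockMap h1 h2
      obtain ⟨m, hm, σ, b, hσ, hb⟩ := ih m' hlt σ' hm'
      exact ⟨m, hm, σ, b ∘ q, hσ, hb.comp hq⟩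

theorem IsBlockMap.eq_of_between {m n : ℕ} {σ : Perm m} {π : Perm n} {b : Fin n → Fin m}
    (hb : IsBlockMap σ π b) {i k l : Fin n} (h : b i = b l)
    (h' : i < k ∧ k < l ∨ π i < π k ∧ π k < π l) : b k = b i := by
  rcases h' with ⟨h1, h2⟩ | ⟨h1, h2⟩
  · exact le_antisymm ((hb.mono h2.le).trans h.ge) (hb.mono h1.le)
  · by_contra hne
    rw [hb.lt_iff _ _ (Ne.symm hne)] at h1
    rw [hb.lt_iff _ _ (by rwa [← h]), ← h] at h2
    exact lt_asymm h1 h2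

theorem IsBlockMap.between_of_between {m n : ℕ} {σ : Perm m} {π : Perm n} {b : Fin n → Fin m}
    (hb : IsBlockMap σ π b) {i k l : Fin n}
    (h : b i < b k ∧ b k < b l ∨ σ (b i) < σ (b k) ∧ σ (b k) < σ (b l)) :
    i < k ∧ k < l ∨ π i < π k ∧ π k < π l := by
  refine h.imp (fun h => ⟨hb.lt_of_lt h.1, hb.lt_of_lt h.2⟩) fun h => ?_
  rwa [hb.lt_iff i k fun h' => h.1.ne (by rw [h']), hb.lt_iff k l fun h' => h.2.ne (by rw [h'])]

theorem isPermInterval_of_between {m : ℕ} {σ : Perm m} {I : Finset (Fin m)}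
    (h : ∀ x y z, x ∈ I → z ∈ I → (x < y ∧ y < z ∨ σ x < σ y ∧ σ y < σ z) → y ∈ I) :
    IsPermInterval σ I := by
  constructor
  · intro x y z hx hz hxy hyz
    rcases hxy.eq_or_lt with rfl | hxy
    · exact hx
    rcases hyz.eq_or_lt with rfl | hyz
    · exact hz
    exact h x y z hx hz (Or.inl ⟨hxy, hyz⟩)
  · intro x y z hx hz hxy hyz
    rcases hxy.eq_or_lt with rfl | hxy
    · exact hx
    rcases hyz.eq_or_lt with rfl | hyz
    · exact hz
    obtain ⟨x, hx', rfl⟩ := Finset.mem_image.1 hx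
    obtain ⟨z, hz', rfl⟩ := Finset.mem_image.1 hz
    obtain ⟨y, rfl⟩ := σ.surjective y
    exact Finset.mem_image_of_mem _ (h x y z hx' hz' (Or.inr ⟨hxy, hyz⟩))

theorem IsBlockMap.eq_of_eq {m m' n : ℕ} {σ : Perm m} {σ' : Perm m'} {π : Perm n}
    {b : Fin n → Fin m} {b' : Fin n → Fin m'} (hb : IsBlockMap σ π b) (hb' : IsBlockMap σ' π b')
    (hσ : IsSimple σ) (hm : 3 ≤ m) (hm' : 2 ≤ m') {i j : Fin n} (hij : b' i = b' j) :
    b i = b j := by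
  classical
  set I : Finset (Fin m) := (Finset.univ.filter fun k => b' k = b' i).image b with hI
  have hmem : ∀ x, x ∈ I ↔ ∃ k, b' k = b' i ∧ b k = x := by simp [hI]
  have hint : IsPermInterval σ I := isPermInterval_of_between fun x y z hx hz h => by
    obtain ⟨p, hp, rfl⟩ := (hmem _).1 hx
    obtain ⟨r, hr, rfl⟩ := (hmem _).1 hz
    obtain ⟨k, rfl⟩ := hb.surj y
    exact (hmem _).2 ⟨k, (hb'.eq_of_between (hp.trans hr.symm) (hb.between_of_between h)).trans hp,
      rfl⟩
  rcases hσ I hint with h | h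
  · exact Finset.card_le_one.1 h _ ((hmem _).2 ⟨i, rfl, rfl⟩) _ ((hmem _).2 ⟨j, hij.symm, rfl⟩)
  · exfalso
    have hu : I = Finset.univ := (Finset.card_eq_iff_eq_univ I).1 (by rw [h, Fintype.card_fin])
    have : Nontrivial (Fin m') := Fin.nontrivial_iff_two_le.2 hm'
    obtain ⟨c, hc⟩ := exists_ne (b' i)
    obtain ⟨k, rfl⟩ := hb'.surj c
    have hint' : IsPermInterval σ (Finset.univ.erase (b k)) :=
      isPermInterval_of_between fun x y z _ _ h => by
        obtain ⟨p, hp, rfl⟩ := (hmem x).1 (by simp [hu])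
        obtain ⟨r, hr, rfl⟩ := (hmem z).1 (by simp [hu])
        rw [Finset.mem_erase]
        refine ⟨?_, Finset.mem_univ _⟩
        rintro rfl
        exact hc ((hb'.eq_of_between (hp.trans hr.symm) (hb.between_of_between h)).trans hp)
    have := hσ _ hint'
    rw [Finset.card_erase_of_mem (Finset.mem_univ _), Finset.card_univ, Fintype.card_fin] at this
    omega

theorem IsBlockMap.exists_factor {m m' n : ℕ} {σ : Perm m} {σ' : Perm m'} {π : Perm n}
    {b : Fin n → Fin m} {b' : Fin n → Fin m'} (hb : IsBlockMap σ π b) (hb' : IsBlockMap σ' π b')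
    (h : ∀ i j, b' i = b' j → b i = b j) :
    ∃ g : Fin m' → Fin m, Monotone g ∧ Function.Surjective g ∧ ∀ i, g (b' i) = b i := by
  choose r hr using hb'.surj
  have hg : ∀ i, b (r (b' i)) = b i := fun i => h _ _ (hr _)
  refine ⟨fun c => b (r c), fun c d hcd => ?_, fun c => ?_, hg⟩
  · rcases hcd.eq_or_lt with rfl | hcd
    · exact le_rfl
    · exact hb.mono (hb'.lt_of_lt (by rwa [hr, hr])).le
  · obtain ⟨i, rfl⟩ := hb.surj c
    exact ⟨b' i, hg i⟩

theorem IsBlockMap.eq_of_isSimple {m n : ℕ} {σ : Perm m} {π : Perm n} {b b' : Fin n → Fin m}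
    (hb : IsBlockMap σ π b) (hb' : IsBlockMap σ π b') (hσ : IsSimple σ) (hm : 3 ≤ m) :
    b = b' := by
  obtain ⟨g, hg, hg', h⟩ := hb.exists_factor hb'
    fun i j => hb.eq_of_eq hb' hσ hm (by omega)
  have : g = id := (StrictMono.range_inj
    (hg.strictMono_of_injective (Finite.injective_iff_surjective.2 hg')) strictMono_id).1
    (by rw [hg'.range_eq, Set.range_id])
  ext1 i
  rw [← h, this, id]

theorem IsBlockMap.sigma_eq {p q : Σ n, Perm n} {n : ℕ} {π : Perm n} {b : Fin n → Fin p.1}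
    {b' : Fin n → Fin q.1} (hb : IsBlockMap p.2 π b) (hb' : IsBlockMap q.2 π b')
    (hp : IsSimple p.2) (hq : IsSimple q.2) (hp2 : 2 ≤ p.1) (hq2 : 2 ≤ q.1) : p = q := by
  have hle : ∀ {p q : Σ n, Perm n} {b : Fin n → Fin p.1} {b' : Fin n → Fin q.1},
      IsBlockMap p.2 π b → IsBlockMap q.2 π b' → IsSimple p.2 → 2 ≤ q.1 → 3 ≤ p.1 →
      p.1 ≤ q.1 := by
    intro p q b b' hb hb' hp hq2 hp3
    obtain ⟨g, -, hg, -⟩ := hb.exists_factor hb' fun i j => hb.eq_of_eq hb' hp hp3 hq2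
    simpa using Fintype.card_le_of_surjective g hg
  by_cases hp3 : 3 ≤ p.1
  · have hpq := hle hb hb' hp hq2 hp3
    obtain ⟨g, hg, hg', h⟩ := hb'.exists_factor hb
      fun i j => hb'.eq_of_eq hb hq (hp3.trans hpq) hp2
    have hqp := hle hb' hb hq hp2 (hp3.trans hpq)
    have hinj := ((Fintype.bijective_iff_surjective_and_card g).2 ⟨hg', by simp; omega⟩).1
    refine sigma_perm_ext g (hg.strictMono_of_injective hinj) hg' fun x y => ?_
    rcases eq_or_ne x y with rfl | hxy
    · simp
    obtain ⟨i, rfl⟩ := hb.surj x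
    obtain ⟨j, rfl⟩ := hb.surj y
    rw [← hb.lt_iff _ _ hxy, h, h, hb'.lt_iff]
    rw [← h, ← h]
    exact hinj.ne hxy
  · have hq3 : ¬ 3 ≤ q.1 := fun h => hp3 (h.trans (hle hb' hb hq hp2 h))
    obtain ⟨m, σ⟩ := p
    obtain ⟨m', σ'⟩ := q
    obtain rfl : m = 2 := by dsimp only at *; omega
    obtain rfl : m' = 2 := by dsimp only at *; omega
    dsimp only at *
    obtain ⟨i, hi, hi'⟩ : ∃ i, b i = 0 ∧ b' i = 0 := by
      obtain ⟨k, hk⟩ := hb.surj 0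
      obtain ⟨k', hk'⟩ := hb'.surj 0
      exact ⟨min k k', le_antisymm (hk ▸ hb.mono (min_le_left _ _)) (Fin.zero_le _),
        le_antisymm (hk' ▸ hb'.mono (min_le_right _ _)) (Fin.zero_le _)⟩
    obtain ⟨j, hj, hj'⟩ : ∃ i, b i = 1 ∧ b' i = 1 := by
      obtain ⟨k, hk⟩ := hb.surj 1
      obtain ⟨k', hk'⟩ := hb'.surj 1
      exact ⟨max k k', le_antisymm (Fin.le_last _) (hk ▸ hb.mono (le_max_left _ _)),
        le_antisymm (Fin.le_last _) (hk' ▸ hb'.mono (le_max_right _ _))⟩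
    refine sigma_perm_ext id strictMono_id Function.surjective_id fun x y => ?_
    have h1 := hb.lt_iff i j (by rw [hi, hj]; exact Fin.zero_ne_one)
    have h2 := hb'.lt_iff i j (by rw [hi', hj']; exact Fin.zero_ne_one)
    have h3 := hb.lt_iff j i (by rw [hi, hj]; exact Fin.zero_ne_one.symm)
    have h4 := hb'.lt_iff j i (by rw [hi', hj']; exact Fin.zero_ne_one.symm)
    rw [hi, hj] at h1 h3
    rw [hi', hj'] at h2 h4
    dsimp only [id]
    fin_cases x <;> fin_cases y <;> simp
    · exact h1.symm.trans h2
    · exact h3.symm.trans h4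

/-- `ρ` is an inflation of `σ`. -/
def Decomposes {m n : ℕ} (σ : Perm m) (ρ : Perm n) : Prop :=
  ∃ b, IsBlockMap σ ρ b

theorem isBlockMap_two {n : ℕ} {σ : Perm 2} {π : Perm n} {b : Fin n → Fin 2} (h : Monotone b)
    (h0 : ∃ i, b i = 0) (h1 : ∃ i, b i = 1)
    (hlt : ∀ i j, b i = 0 → b j = 1 → (π i < π j ↔ σ 0 < σ 1)) : IsBlockMap σ π b := by
  refine ⟨h, fun c => ?_, fun i j hij => ?_⟩
  · fin_cases c
    exacts [h0, h1]
  · have h01 : ∀ c : Fin 2, c = 0 ∨ c = 1 := by decide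
    rcases h01 (b i) with hi | hi <;> rcases h01 (b j) with hj | hj
    · exact absurd (hi.trans hj.symm) hij
    · rw [hi, hj, hlt i j hi hj]
    · have h1 : π i ≠ π j := π.injective.ne fun h => hij (by rw [h])
      have h2 : σ 1 ≠ σ 0 := σ.injective.ne (by decide)
      rw [hi, hj, ← h1.le_iff_lt, ← h2.le_iff_lt, ← not_lt, ← not_lt, hlt j i hj hi]
    · exact absurd (hi.trans hj.symm) hij

theorem decomposes_iff {n : ℕ} {σ : Perm 2} {π : Perm n} {b : Fin n → Fin 2}
    (hb : IsBlockMap σ π b) {p : Σ k, Perm k} (hp : IsPat π {i | b i = 0} p) :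
    Decomposes σ p.2 ↔ ∃ b', IsBlockMap σ π b' ∧ {i | b' i = 0} ⊂ {i | b i = 0} := by
  classical
  have h01 : ∀ c : Fin 2, c ≠ 0 ↔ c = 1 := by decide
  obtain ⟨e, he, hF, hc⟩ := hp
  simp only [Set.mem_ofPred_eq] at hF
  constructor
  · rintro ⟨b0, hb0⟩
    set b' : Fin n → Fin 2 := fun i => if ∃ x, e x = i ∧ b0 x = 0 then 0 else 1 with hb'
    have h0 : ∀ i, b' i = 0 ↔ ∃ x, e x = i ∧ b0 x = 0 := fun i => by
      simp [hb']
    obtain ⟨x, hx⟩ := hb0.surj 0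
    obtain ⟨y, hy⟩ := hb0.surj 1
    have hy' : b' (e y) ≠ 0 := fun h => by
      obtain ⟨z, hz, hz'⟩ := (h0 _).1 h
      rw [he.injective hz, hy] at hz'
      exact absurd hz' (by decide)
    refine ⟨b', isBlockMap_two (fun i j hij => ?_) ⟨e x, (h0 _).2 ⟨x, rfl, hx⟩⟩
      ⟨e y, (h01 _).1 hy'⟩ fun i j hi hj => ?_, fun i hi => ?_, fun h => ?_⟩
    · rcases eq_or_ne (b' j) 0 with h | h
      · obtain ⟨z, rfl, hz⟩ := (h0 _).1 h
        have hbz : b (e z) = 0 := (hF _).2 ⟨z, rfl⟩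
        obtain ⟨w, rfl⟩ := (hF i).1 (le_antisymm (hbz ▸ hb.mono hij) (Fin.zero_le _))
        rw [(h0 _).2 ⟨w, rfl, le_antisymm (hz ▸ hb0.mono (he.le_iff_le.1 hij)) (Fin.zero_le _)⟩]
        exact Fin.zero_le _
      · rw [(h01 _).1 h]
        exact Fin.le_last _
    · obtain ⟨z, rfl, hz⟩ := (h0 _).1 hi
      have hbz : b (e z) = 0 := (hF _).2 ⟨z, rfl⟩
      rcases eq_or_ne (b j) 0 with h | h
      · obtain ⟨w, rfl⟩ := (hF j).1 h
        have hw : b0 w = 1 := (h01 _).1 fun h => by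
          rw [(h0 _).2 ⟨w, rfl, h⟩] at hj
          exact absurd hj (by decide)
        rw [hc, hb0.lt_iff, hz, hw]
        rw [hz, hw]
        decide
      · rw [hb.lt_iff, hbz, (h01 _).1 h]
        rw [hbz]
        exact h.symm
    · obtain ⟨z, rfl, hz⟩ := (h0 _).1 hi
      exact (hF _).2 ⟨z, rfl⟩
    · exact hy' (h ((hF _).2 ⟨y, rfl⟩))
  · rintro ⟨b', hb', hss⟩
    obtain ⟨hsub, hnot⟩ := hss
    obtain ⟨j, hj, hj'⟩ := Set.not_subset.1 hnot
    obtain ⟨i, hi⟩ := hb'.surj 0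
    obtain ⟨x, rfl⟩ := (hF _).1 (hsub hi)
    obtain ⟨y, rfl⟩ := (hF _).1 hj
    refine ⟨b' ∘ e, isBlockMap_two (hb'.mono.comp he.monotone) ⟨x, hi⟩ ⟨y, (h01 _).1 hj'⟩
      fun z w hz hw => ?_⟩
    dsimp only [Function.comp_apply] at hz hw
    rw [← hc, hb'.lt_iff, hz, hw]
    rw [hz, hw]
    decide

theorem exists_isBlockMap_not_decomposes {n : ℕ} {σ : Perm 2} {π : Perm n} (h : Decomposes σ π) :
    ∃ b, IsBlockMap σ π b ∧ ∀ p, IsPat π {i | b i = 0} p → ¬ Decomposes σ p.2 := by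
  obtain ⟨b, hb, hmin⟩ := WellFounded.has_min
    (measure fun b : Fin n → Fin 2 => {i | b i = 0}.ncard).wf {b | IsBlockMap σ π b} h
  refine ⟨b, hb, fun p hp hd => ?_⟩
  obtain ⟨b', hb', hss⟩ := (decomposes_iff hb hp).1 hd
  exact hmin b' hb' (Set.ncard_lt_ncard hss)

theorem IsBlockMap.eq_of_not_decomposes {n : ℕ} {σ : Perm 2} {π : Perm n} {b b' : Fin n → Fin 2}
    (hb : IsBlockMap σ π b) (hb' : IsBlockMap σ π b') {p p' : Σ k, Perm k}
    (hp : IsPat π {i | b i = 0} p) (hp' : IsPat π {i | b' i = 0} p')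
    (hd : ¬ Decomposes σ p.2) (hd' : ¬ Decomposes σ p'.2) : b = b' := by
  rw [decomposes_iff hb hp] at hd
  rw [decomposes_iff hb' hp'] at hd'
  have h01 : ∀ c : Fin 2, c ≠ 0 ↔ c = 1 := by decide
  have key : ∀ {b b' : Fin n → Fin 2}, IsBlockMap σ π b → IsBlockMap σ π b' →
      (¬ ∃ b', IsBlockMap σ π b' ∧ {i | b' i = 0} ⊂ {i | b i = 0}) → ∀ i, b i = 0 → b' i = 0 := by
    intro b b' hb hb' hd i hi
    by_contra hi'
    refine hd ⟨b', hb', fun j hj => ?_, fun h => hi' (h hi)⟩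
    by_contra hj'
    rw [Set.mem_ofPred_eq] at hj hj'
    have h1 : i < j := hb.lt_of_lt (by rw [hi, (h01 _).1 hj']; decide)
    have h2 : j < i := hb'.lt_of_lt (by rw [hj, (h01 _).1 hi']; decide)
    exact lt_asymm h1 h2
  ext1 i
  by_cases h : b i = 0
  · rw [h, key hb hb' hd i h]
  · have h' : ¬ b' i = 0 := fun h' => h (key hb' hb hd' i h')
    rw [(h01 _).1 h, (h01 _).1 h']

theorem partiallyWellOrderedOn_lt_minBadSeq {α : Type*} {r : α → α → Prop} [IsTrans α r]
    {rk : α → ℕ} {f : ℕ → α} (hf : Set.PartiallyWellOrderedOn.IsBadSeq r Set.univ f)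
    (hmin : ∀ n, Set.PartiallyWellOrderedOn.IsMinBadSeq r rk Set.univ n f) :
    {d | ∃ n, r d (f n) ∧ rk d < rk (f n)}.PartiallyWellOrderedOn r := by
  rw [Set.PartiallyWellOrderedOn.iff_forall_not_isBadSeq]
  rintro h ⟨hmem, hbad⟩
  choose ν hν hν' using hmem
  obtain ⟨k, hk⟩ : ∃ k, ∀ l, ν k ≤ ν l := by
    obtain ⟨k, -, hk⟩ := WellFounded.has_min (measure ν).wf Set.univ ⟨0, trivial⟩
    exact ⟨k, fun l => not_lt.1 (hk l trivial)⟩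
  refine hmin (ν k) (fun i => if i < ν k then f i else h (k + (i - ν k)))
    (fun m hm => (if_pos hm).symm) (by simpa using hν' k) ⟨fun _ => trivial, fun i j hij => ?_⟩
  beta_reduce
  by_cases hj : j < ν k
  · rw [if_pos hj, if_pos (hij.trans hj)]
    exact hf.2 i j hij
  rw [if_neg hj]
  by_cases hi : i < ν k
  · rw [if_pos hi]
    exact fun hr => hf.2 i _ (hi.trans_le (hk _)) (_root_.trans hr (hν _))
  · rw [if_neg hi]
    exact hbad _ _ (by omega)

theorem IsInflation.size_lt {m : ℕ} {σ : Perm m} {α : Fin m → Σ k, Perm k} {π : Σ n, Perm n}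
    (h : IsInflation σ α π) (hα : ∀ c, 0 < (α c).1) (hm : 2 ≤ m) (c : Fin m) :
    (α c).1 < π.1 := by
  have : Nontrivial (Fin m) := Fin.nontrivial_iff_two_le.2 hm
  obtain ⟨d, hd⟩ := exists_ne c
  rw [h.size_eq]
  exact Finset.single_lt_sum (f := fun c => (α c).1) hd (Finset.mem_univ c) (Finset.mem_univ d)
    (hα d) fun _ _ _ => Nat.zero_le _

theorem contains_of_size_eq_one {p q : Σ n, Perm n} (hp : p.1 = 1) (hq : 0 < q.1) :
    Contains p.2 q.2 := by
  have : Subsingleton (Fin p.1) := by rw [hp]; infer_instance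
  exact ⟨fun _ => ⟨0, hq⟩, Subsingleton.strictMono _, fun s t => by
    rw [Subsingleton.elim s t]; simp⟩

theorem finite_perm_le (N : ℕ) : Finite {p : Σ n, Perm n // p.1 ≤ N} :=
  Finite.of_surjective
    (fun q : Σ n : Fin (N + 1), Perm n => ⟨⟨q.1, q.2⟩, Nat.le_of_lt_succ q.1.2⟩)
    fun ⟨⟨n, π⟩, h⟩ => ⟨⟨⟨n, Nat.lt_succ_of_le h⟩, π⟩, rfl⟩

/-- The nonempty members of a class. -/
@[ext]
structure ClassElt (C : ∀ n, Set (Perm n)) where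
  /-- The underlying permutation. -/
  perm : Σ n, Perm n
  mem : perm.2 ∈ C perm.1
  pos : 0 < perm.1

/-- The simple permutations of length at least two in a class. -/
abbrev ClassSimple (C : ∀ n, Set (Perm n)) : Type :=
  {p : Σ n, Perm n // p.2 ∈ C p.1 ∧ IsSimple p.2 ∧ 2 ≤ p.1}

namespace ClassElt

variable {C : ∀ n, Set (Perm n)}

instance : Preorder (ClassElt C) where
  le x y := Contains x.perm.2 y.perm.2
  le_refl x := contains_refl _
  le_trans _ _ _ := Contains.trans

/-- The length of a member of a class. -/
def size (x : ClassElt C) : ℕ := x.perm.1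

/-- The components of the inflation of `s` with blocks `x` that equals `y`, normalized so that the
first component is indecomposable with respect to `s` if `s` has length two. -/
def IsDecomposition (s : ClassSimple C) (x : Fin s.1.1 → ClassElt C) (y : ClassElt C) : Prop :=
  ∃ b, IsBlockMap s.1.2 y.perm.2 b ∧ (∀ c, IsPat y.perm.2 {i | b i = c} (x c).perm) ∧
    (s.1.1 = 2 → ∀ c, c.1 = 0 → ¬ Decomposes s.1.2 (x c).perm.2)

theorem IsDecomposition.isInflation {s : ClassSimple C} {x : Fin s.1.1 → ClassElt C}
    {y : ClassElt C} (h : IsDecomposition s x y) :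
    IsInflation s.1.2 (fun c => (x c).perm) y.perm := by
  obtain ⟨b, hb, h, -⟩ := h
  exact ⟨b, hb, h⟩

theorem exists_isDecomposition (hC : IsPermClass C) (y : ClassElt C) (hy : y.size ≠ 1) :
    ∃ s x, IsDecomposition s x y := by
  obtain ⟨m, hm, σ, b, hσ, hb⟩ := exists_isSimple_isBlockMap y.perm.2
    (show 2 ≤ y.perm.1 by have := y.pos; unfold size at hy; omega)
  obtain ⟨b, hb, hd⟩ : ∃ b, IsBlockMap σ y.perm.2 b ∧
      (m = 2 → ∀ c : Fin m, c.1 = 0 → ∀ p, IsPat y.perm.2 {i | b i = c} p →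
        ¬ Decomposes σ p.2) := by
    by_cases h2 : m = 2
    · subst h2
      obtain ⟨b', hb', h⟩ := exists_isBlockMap_not_decomposes ⟨b, hb⟩
      refine ⟨b', hb', fun _ c hc => ?_⟩
      obtain rfl : c = 0 := Fin.ext hc
      exact h
    · exact ⟨b, hb, fun h => absurd h h2⟩
  obtain ⟨α, hα, hp⟩ := hb.exists_isInflation
  exact ⟨⟨⟨m, σ⟩, hC _ _ y.mem hb.contains, hσ, hm⟩,
    fun c => ⟨α c, hC _ _ y.mem (hp c).contains, hα c⟩, b, hb, hp,
    fun h c hc => hd h c hc _ (hp c)⟩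

theorem IsDecomposition.sigma_eq {s s' : ClassSimple C} {x : Fin s.1.1 → ClassElt C}
    {x' : Fin s'.1.1 → ClassElt C} {y : ClassElt C} (h : IsDecomposition s x y)
    (h' : IsDecomposition s' x' y) :
    (⟨s, x⟩ : Σ s : ClassSimple C, Fin s.1.1 → ClassElt C) = ⟨s', x'⟩ := by
  obtain ⟨b, hb, hp, hd⟩ := h
  obtain ⟨b', hb', hp', hd'⟩ := h'
  obtain rfl : s = s' :=
    Subtype.ext (hb.sigma_eq hb' s.2.2.1 s'.2.2.1 s.2.2.2 s'.2.2.2)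
  obtain rfl : b = b' := by
    by_cases h3 : 3 ≤ s.1.1
    · exact hb.eq_of_isSimple hb' s.2.2.1 h3
    · obtain ⟨⟨m, σ⟩, hs⟩ := s
      obtain rfl : m = 2 := by have := hs.2.2; dsimp only at *; omega
      exact hb.eq_of_not_decomposes hb' (hp 0) (hp' 0) (hd rfl 0 rfl) (hd' rfl 0 rfl)
  obtain rfl : x = x' := funext fun c => ClassElt.ext ((hp c).unique (hp' c))
  rfl

theorem wellQuasiOrdered (hC : IsPermClass C) [Finite (ClassSimple C)] :
    WellQuasiOrdered fun x y : ClassElt C => x ≤ y := by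
  rw [← Set.partiallyWellOrderedOn_univ_iff,
    Set.PartiallyWellOrderedOn.iff_not_exists_isMinBadSeq size]
  rintro ⟨f, hf, hmin⟩
  have hD := partiallyWellOrderedOn_lt_minBadSeq hf hmin
  set D : Set (ClassElt C) := {d | ∃ n, d ≤ f n ∧ d.size < (f n).size} with hD'
  have hsize : ∀ n, (f n).size ≠ 1 := fun n h =>
    hf.2 n (n + 1) n.lt_succ_self (contains_of_size_eq_one h (f (n + 1)).pos)
  choose s x hx using fun n => exists_isDecomposition hC (f n) (hsize n)
  obtain ⟨g, hg⟩ :=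
    (Finite.wellQuasiOrdered fun s t : ClassSimple C => s = t).exists_monotone_subseq s
  have hdec : ∀ n, ∃ z : Fin (s (g 0)).1.1 → D,
      IsInflation (s (g 0)).1.2 (fun c => (z c).1.perm) (f (g n)).perm := by
    intro n
    rw [hg 0 n n.zero_le]
    refine ⟨fun c => ⟨x (g n) c, g n, ?_, ?_⟩, (hx _).isInflation⟩
    · obtain ⟨b, -, hp, -⟩ := hx (g n)
      exact (hp c).contains
    · exact (hx _).isInflation.size_lt (fun c => (x _ c).pos) (s (g n)).2.2.2 c
  choose z hz using hdec
  have hpi : WellQuasiOrdered fun a b : Fin (s (g 0)).1.1 → D => ∀ c, a c ≤ b c :=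
    WellQuasiOrdered.pi fun _ => hD
  obtain ⟨i, j, hij, h⟩ := hpi z
  exact hf.2 _ _ (g.strictMono hij) ((hz i).mono (hz j) h)

theorem exists_bound_mem (hC : IsPermClass C)
    (hwqo : WellQuasiOrdered fun x y : ClassElt C => x ≤ y) {m : ℕ} (σ : Perm m) :
    ∃ N, ∀ x x' : Fin m → ClassElt C,
      (∀ c (τ : Σ k, Perm k), τ.1 ≤ N → Contains τ.2 (x' c).perm.2 → Contains τ.2 (x c).perm.2) →
      ∀ y y', IsInflation σ (fun c => (x c).perm) y → IsInflation σ (fun c => (x' c).perm) y' →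
      y.2 ∈ C y.1 → y'.2 ∈ C y'.1 := by
  by_contra! hcon
  choose x x' h y y' hy hy' hyC hyC' using hcon
  have hpi : WellQuasiOrdered fun a b : Fin m → ClassElt C => a ≤ b :=
    WellQuasiOrdered.pi fun _ => hwqo
  obtain ⟨g, hg⟩ := hpi.exists_monotone_subseq x'
  set n := ∑ c, (x' (g 0) c).size with hn
  refine hyC' (g 0) (hC _ _ (hyC (g n)) ((hy' (g 0)).mono (hy (g n)) fun c => ?_))
  refine h (g n) c _ ?_ (hg 0 n n.zero_le c)
  calc (x' (g 0) c).size ≤ n :=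
        Finset.single_le_sum (f := fun c => (x' (g 0) c).size) (fun _ _ => Nat.zero_le _)
          (Finset.mem_univ c)
    _ ≤ g n := g.strictMono.le_apply

theorem isAlgebraic_sizeGF_size (hC : IsPermClass C) [Finite (ClassSimple C)] :
    IsAlgebraic (Polynomial ℚ) (sizeGF (size (C := C))) := by
  choose N hN using fun s : ClassSimple C => exists_bound_mem hC (wellQuasiOrdered hC) s.1.2
  obtain ⟨M, hM⟩ := (Set.finite_range N).bddAbove
  have hNM : ∀ s, N s ≤ M := fun s => hM ⟨s, rfl⟩
  have := finite_perm_le M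
  refine isAlgebraic_sizeGF size (fun n => ?_) (fun x => x.pos)
    (fun x => (({τ | Contains τ.1.2 x.perm.2}, {s | Decomposes s.1.2 x.perm.2}) :
      Set {p : Σ n, Perm n // p.1 ≤ M} × Set (ClassSimple C)))
    (fun s : ClassSimple C => s.1.1) (fun s => s.2.2.2) IsDecomposition
    (fun {s x y} h => h.isInflation.size_eq) ?_ (exists_isDecomposition hC)
    (fun {s x y y'} h h' => ClassElt.ext (h.isInflation.unique h'.isInflation))
    (fun {s x s' x' y} h h' => h.sigma_eq h')
  · have := finite_perm_le n
    refine Finite.of_injective (β := {p : Σ n, Perm n // p.1 ≤ n})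
      (fun x => ⟨x.1.perm, x.2.le⟩) fun x y h => Subtype.ext (ClassElt.ext (Subtype.mk.inj h))
  · intro s x x' y hty hy
    simp only [Prod.mk.injEq, Set.ext_iff, Set.mem_ofPred_eq] at hty
    have hc : ∀ c (τ : Σ k, Perm k), τ.1 ≤ M →
        (Contains τ.2 (x c).perm.2 ↔ Contains τ.2 (x' c).perm.2) :=
      fun c τ hτ => (hty c).1 ⟨τ, hτ⟩
    obtain ⟨π, hπ⟩ := exists_isInflation s.1.2 (fun c => (x' c).perm) fun c => (x' c).pos
    have hπC : π.2 ∈ C π.1 := hN s x x' (fun c τ hτ => (hc c τ (hτ.trans (hNM s))).2) _ _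
      hy.isInflation hπ y.mem
    have hπ0 : 0 < π.1 := (x' ⟨0, by have := s.2.2.2; omega⟩).pos.trans
      (hπ.size_lt (fun c => (x' c).pos) s.2.2.2 _)
    obtain ⟨b, hb, hp, hd⟩ := id hy
    obtain ⟨b', hb', hp'⟩ := id hπ
    refine ⟨⟨π, hπC, hπ0⟩, ⟨b', hb', hp', fun h c h0 hdec => hd h c h0 ?_⟩, ?_⟩
    · exact ((hty c).2 s).2 hdec
    · simp only [Prod.mk.injEq, Set.ext_iff, Set.mem_ofPred_eq]
      refine ⟨fun τ => ⟨hπ.contains_of_contains hy.isInflation M (fun c τ hτ => (hc c τ hτ).2)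
        τ.1 τ.2, hy.isInflation.contains_of_contains hπ M (fun c τ hτ => (hc c τ hτ).1)
        τ.1 τ.2⟩, fun t => ⟨?_, ?_⟩⟩
      · rintro ⟨q, hq⟩
        obtain rfl : t = s := Subtype.ext (hq.sigma_eq hb' t.2.2.1 s.2.2.1 t.2.2.2 s.2.2.2)
        exact ⟨b, hb⟩
      · rintro ⟨q, hq⟩
        obtain rfl : t = s := Subtype.ext (hq.sigma_eq hb t.2.2.1 s.2.2.1 t.2.2.2 s.2.2.2)
        exact ⟨b', hb'⟩

theorem sizeGF_size_eq (C : ∀ n, Set (Perm n)) : sizeGF (size (C := C)) = genFun C := by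
  ext n
  rw [sizeGF, genFun, PowerSeries.coeff_mk, PowerSeries.coeff_mk]
  split_ifs with hn
  · have : IsEmpty {x : ClassElt C // x.size = n} := ⟨fun x => x.1.pos.ne' (x.2.trans hn)⟩
    simp
  · rw [Nat.card_congr (Equiv.ofBijective (fun π : C n =>
      (⟨⟨⟨n, π.1⟩, π.2, Nat.pos_of_ne_zero hn⟩, rfl⟩ : {x : ClassElt C // x.size = n})) ⟨?_, ?_⟩)]
    · rintro ⟨π, h⟩ ⟨π', h'⟩ heq
      have h1 : (⟨n, π⟩ : Σ n, Perm n) = ⟨n, π'⟩ :=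
        congrArg (fun x : {x : ClassElt C // x.size = n} => x.1.perm) heq
      exact Subtype.ext (eq_of_heq (Sigma.mk.inj h1).2)
    · rintro ⟨⟨⟨n, π⟩, h, hp⟩, rfl⟩
      exact ⟨⟨π, h⟩, rfl⟩

end ClassElt

/-- If `C` is a permutation class containing only finitely many simple permutations,
then the generating function of `C` is algebraic over `ℚ[x]`. -/
theorem statement0 (C : ∀ n, Set (Perm n)) (hC : IsPermClass C)
    (hfin : FinitelyManySimples C) : IsAlgebraicOverQx (genFun C) := by
  have : Finite (ClassSimple C) :=
    (hfin.subset (t := {p | p.2 ∈ C p.1 ∧ IsSimple p.2 ∧ 2 ≤ p.1})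
      fun p hp => ⟨hp.1, hp.2.1⟩).to_subtype
  obtain ⟨P, hP, h⟩ := ClassElt.isAlgebraic_sizeGF_size hC
  refine ⟨P, hP, ?_⟩
  rwa [ClassElt.sizeGF_size_eq, Polynomial.aeval_def, algebraMap_polynomial_powerSeries] at h
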